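/- arXiv:2110.15550 — 2 statements merged into one kernel-verified Lean document; each statement's English description precedes it below -/
import Mathlib

section
/- Assume f satisfies the Polyak–Łojasiewicz inequality with parameter μ > 0. Let (x_k), (η_k) satisfy the scheme with η_k > 0 for every k. Then for every k ≥ 0, f(x_k) − f⋆ ≤ exp(−8μkh/(Lh + 2)²)(f(x₀) − f⋆). -/
open RealInnerProductSpace

theorem descent_aux {n : ℕ} (f : EuclideanSpace ℝ (Fin n) → ℝ)
    (f' : EuclideanSpace ℝ (Fin n) → EuclideanSpace ℝ (Fin n))
    (hf : ∀ x, HasGradientAt f (f' x) x) (L : ℝ)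
    (hLip : ∀ x y, ‖f' x - f' y‖ ≤ L * ‖x - y‖)
    (x d : EuclideanSpace ℝ (Fin n)) :
    f (x + d) ≤ f x + inner ℝ (f' x) d + L / 2 * ‖d‖ ^ 2 := by
  have hder : ∀ t : ℝ, HasDerivAt
      (fun t : ℝ => f (x + t • d) - t * inner ℝ (f' x) d - L / 2 * ‖d‖ ^ 2 * t ^ 2)
      (inner ℝ (f' (x + t • d)) d - inner ℝ (f' x) d - L * ‖d‖ ^ 2 * t) t := by
    intro t
    have h1 : HasDerivAt (fun t : ℝ => x + t • d) d t := by
      simpa using ((hasDerivAt_id t).smul_const d).const_add x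
    have h2 := (hf (x + t • d)).hasFDerivAt.comp_hasDerivAt t h1
    have h3 : HasDerivAt (fun t : ℝ => t * inner ℝ (f' x) d) (inner ℝ (f' x) d) t := by
      simpa using (hasDerivAt_id t).mul_const (inner ℝ (f' x) d)
    have h4 := (hasDerivAt_pow 2 t).const_mul (L / 2 * ‖d‖ ^ 2)
    have h5 := (h2.sub h3).sub h4
    refine h5.congr_deriv ?_
    simp
    ring
  have hanti := antitoneOn_of_deriv_nonpos (convex_Icc (0 : ℝ) 1)
    (fun t _ => (hder t).continuousAt.continuousWithinAt)
    (fun t _ => (hder t).differentiableAt.differentiableWithinAt)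
    (fun t ht => by
      rw [interior_Icc] at ht
      rw [(hder t).deriv, ← inner_sub_left]
      have h1 := real_inner_le_norm (f' (x + t • d) - f' x) d
      have h2 := hLip (x + t • d) x
      rw [add_sub_cancel_left, norm_smul, Real.norm_of_nonneg ht.1.le] at h2
      have h3 := mul_le_mul_of_nonneg_right h2 (norm_nonneg d)
      nlinarith)
  have := hanti (Set.left_mem_Icc.2 zero_le_one) (Set.right_mem_Icc.2 zero_le_one) zero_le_one
  simp at this
  linarith

/-- Linear rate under the PŁ inequality (Theorem `thm:LMrate3`). -/
theorem stmt_14 (n : ℕ) (hn : 1 ≤ n)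
    (f : EuclideanSpace ℝ (Fin n) → ℝ)
    (f' : EuclideanSpace ℝ (Fin n) → EuclideanSpace ℝ (Fin n))
    (hf : ∀ x, HasGradientAt f (f' x) x)
    (L : ℝ) (hL : 0 < L)
    (hLip : ∀ x y, ‖f' x - f' y‖ ≤ L * ‖x - y‖)
    (xstar : EuclideanSpace ℝ (Fin n)) (hstar : ∀ y, f xstar ≤ f y)
    (μ : ℝ) (hμ : 0 < μ)
    (hPL : ∀ y, μ * (f y - f xstar) ≤ (1/2) * ‖f' y‖ ^ 2)
    (h : ℝ) (hh : 0 < h)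
    (x : ℕ → EuclideanSpace ℝ (Fin n)) (η : ℕ → ℝ) (hηpos : ∀ k, 0 < η k)
    (hscheme1 : ∀ k : ℕ, x (k + 1) = x k - (h * η k) • f' (x k))
    (hscheme2 : ∀ k : ℕ,
      f (x (k + 1)) - f (x k) = η k * ⟪f' (x k), x (k + 1) - x k⟫) :
    ∀ k : ℕ,
      f (x k) - f xstar ≤
        Real.exp (-(8 * μ * k * h) / (L * h + 2) ^ 2) * (f (x 0) - f xstar) := by
  have hc : (0 : ℝ) < L * h + 2 := by positivity
  have step : ∀ k, f (x (k + 1)) - f xstar ≤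
      Real.exp (-(8 * μ * h) / (L * h + 2) ^ 2) * (f (x k) - f xstar) := by
    intro k
    have hd : x (k + 1) - x k = -((h * η k) • f' (x k)) := by rw [hscheme1 k]; abel
    have e2 := hscheme2 k
    have hdes := descent_aux f f' hf L hLip (x k) (x (k + 1) - x k)
    rw [add_sub_cancel] at hdes
    rw [hd, inner_neg_right, real_inner_smul_right, real_inner_self_eq_norm_sq] at e2 hdes
    rw [norm_neg, norm_smul, mul_pow, Real.norm_eq_abs, sq_abs] at hdes
    have hη := hηpos k
    have hpl := hPL (x k)
    have hs := hstar (x k)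
    set G := ‖f' (x k)‖ ^ 2 with hG
    have hG0 : 0 ≤ G := by positivity
    have key : 4 * G ≤ (η k * (L * h + 2)) ^ 2 * G := by
      rcases hG0.eq_or_lt with h0 | h0
      · rw [← h0]; simp
      · have h1 : 0 ≤ (h * η k * G) * (η k * (L * h + 2) - 2) := by nlinarith
        have h2 : 0 ≤ η k * (L * h + 2) - 2 := nonneg_of_mul_nonneg_right h1 (by positivity)
        have h3 : 4 ≤ (η k * (L * h + 2)) ^ 2 := by nlinarith
        exact mul_le_mul_of_nonneg_right h3 hG0
    have dec : 8 * μ * h / (L * h + 2) ^ 2 * (f (x k) - f xstar) ≤ h * η k ^ 2 * G := by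
      rw [div_mul_eq_mul_div, div_le_iff₀ (by positivity)]
      have a1 := mul_le_mul_of_nonneg_left key hh.le
      have a2 := mul_le_mul_of_nonneg_left hpl hh.le
      nlinarith
    have hexp := Real.add_one_le_exp (-(8 * μ * h) / (L * h + 2) ^ 2)
    have hm := mul_le_mul_of_nonneg_right hexp (sub_nonneg.2 hs)
    rw [neg_div] at hm ⊢
    nlinarith
  intro k
  induction k with
  | zero => simp
  | succ k ih =>
    refine (step k).trans ((mul_le_mul_of_nonneg_left ih (Real.exp_pos _).le).trans (le_of_eq ?_))
    rw [← mul_assoc, ← Real.exp_add]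
    congr 2
    push_cast
    ring
end

section
/- Let (x_k) be the sequence generated by the backtracking algorithm. Then: (i) for every k ≥ 0, min over 0 ≤ i ≤ k of ‖∇f(x_i)‖ ≤ ((Lh + 2)/(2α)) sqrt((f(x₀) − f⋆)/((k+1)h)); (ii) if f is convex, there exists a constant C > 0 such that f(x_k) − f⋆ ≤ C/k for all k ≥ 1; (iii) if f satisfies the Polyak–Łojasiewicz inequality with parameter μ > 0, then f(x_k) − f⋆ ≤ exp(−8α²μkh/(Lh + 2)²)(f(x₀) − f⋆) for all k ≥ 0. -/
open RealInnerProductSpace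


lemma line_deriv {E : Type*} [NormedAddCommGroup E] [InnerProductSpace ℝ E] [CompleteSpace E]
    (f : E → ℝ) (f' : E → E) (hf : ∀ x, HasGradientAt f (f' x) x) (x v : E) (t : ℝ) :
    HasDerivAt (fun t : ℝ => f (x + t • v)) (inner ℝ (f' (x + t • v)) v) t := by
  have h1 : HasDerivAt (fun t : ℝ => x + t • v) v t := by
    simpa using ((hasDerivAt_id t).smul_const v).const_add x
  have h2 := (hf (x + t • v)).hasFDerivAt.comp_hasDerivAt t h1
  simp only [InnerProductSpace.toDual_apply_apply] at h2
  exact h2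

lemma descent {E : Type*} [NormedAddCommGroup E] [InnerProductSpace ℝ E] [CompleteSpace E]
    (f : E → ℝ) (f' : E → E) (hf : ∀ x, HasGradientAt f (f' x) x) (L : ℝ)
    (hLip : ∀ x y, ‖f' x - f' y‖ ≤ L * ‖x - y‖) (x : E) (s : ℝ) (hs : 0 ≤ s) :
    f (x - s • f' x) ≤ f x - s * ‖f' x‖ ^ 2 + L / 2 * s ^ 2 * ‖f' x‖ ^ 2 := by
  set g := f' x with hg
  let φ : ℝ → ℝ := fun t => f (x + t • (-g)) + t * ‖g‖ ^ 2 - L / 2 * t ^ 2 * ‖g‖ ^ 2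
  have hd : ∀ t, HasDerivAt φ (inner ℝ (f' (x + t • (-g))) (-g) + ‖g‖ ^ 2 - L * t * ‖g‖ ^ 2) t := by
    intro t
    have h1 := line_deriv f f' hf x (-g) t
    have h2 : HasDerivAt (fun t : ℝ => t * ‖g‖ ^ 2) (‖g‖ ^ 2) t := by
      simpa using (hasDerivAt_id t).mul_const (‖g‖ ^ 2)
    have h3 : HasDerivAt (fun t : ℝ => L / 2 * t ^ 2 * ‖g‖ ^ 2) (L * t * ‖g‖ ^ 2) t := by
      have := (((hasDerivAt_id t).pow 2).const_mul (L / 2)).mul_const (‖g‖ ^ 2)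
      exact this.congr_deriv (by norm_num [id]; left; ring)
    exact (h1.add h2).sub h3
  have hanti : AntitoneOn φ (Set.Ici 0) := by
    apply antitoneOn_of_deriv_nonpos (convex_Ici 0)
    · exact fun t _ => (hd t).continuousAt.continuousWithinAt
    · exact fun t _ => (hd t).differentiableAt.differentiableWithinAt
    · intro t ht
      rw [interior_Ici] at ht
      have ht : 0 < t := ht
      rw [(hd t).deriv]
      have h1 : inner ℝ (f' (x + t • (-g))) (-g) + ‖g‖ ^ 2
          = inner ℝ (g - f' (x + t • (-g))) g := by
        rw [inner_sub_left, inner_neg_right, real_inner_self_eq_norm_sq]; ring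
      have h2 := real_inner_le_norm (g - f' (x + t • (-g))) g
      have h3 := hLip x (x + t • (-g))
      have h4 : ‖x - (x + t • (-g))‖ = t * ‖g‖ := by
        rw [show x - (x + t • (-g)) = t • g by simp, norm_smul, Real.norm_of_nonneg ht.le]
      rw [h4, ← hg] at h3
      have h5 := mul_le_mul_of_nonneg_right h3 (norm_nonneg g)
      rw [h1]
      nlinarith
  have := hanti (Set.mem_Ici.2 le_rfl) (Set.mem_Ici.2 hs) hs
  simp only [φ] at this
  simp only [smul_neg, zero_smul, neg_zero, add_zero, ← sub_eq_add_neg] at this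
  linarith

lemma convex_first {E : Type*} [NormedAddCommGroup E] [InnerProductSpace ℝ E] [CompleteSpace E]
    (f : E → ℝ) (f' : E → E) (hf : ∀ x, HasGradientAt f (f' x) x)
    (hc : ConvexOn ℝ Set.univ f) (x y : E) :
    f x - f y ≤ inner ℝ (f' x) (x - y) := by
  have h1 := line_deriv f f' hf x (y - x) 0
  have h2 : ConvexOn ℝ Set.univ (fun t : ℝ => f (x + t • (y - x))) := by
    have : ConvexOn ℝ Set.univ (f ∘ (AffineMap.lineMap (k := ℝ) x y)) :=
      hc.comp_affineMap (AffineMap.lineMap (k := ℝ) x y)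
    convert this using 2 with t
    simp [AffineMap.lineMap_apply, add_comm]
  have h3 := h2.le_slope_of_hasDerivAt (Set.mem_univ 0) (Set.mem_univ 1) one_pos h1
  simp [slope_def_field] at h3
  rw [← neg_sub y x, inner_neg_right]
  linarith

/-- Convergence rates of the backtracking algorithm (Theorem `thm:convrate_bt`). -/
theorem stmt_17 (n : ℕ) (hn : 1 ≤ n)
    (f : EuclideanSpace ℝ (Fin n) → ℝ)
    (f' : EuclideanSpace ℝ (Fin n) → EuclideanSpace ℝ (Fin n))
    (hf : ∀ x, HasGradientAt f (f' x) x)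
    (L : ℝ) (hL : 0 < L)
    (hLip : ∀ x y, ‖f' x - f' y‖ ≤ L * ‖x - y‖)
    (xstar : EuclideanSpace ℝ (Fin n)) (hstar : ∀ y, f xstar ≤ f y)
    (F : ℝ → ℝ → EuclideanSpace ℝ (Fin n) → ℝ)
    (hF : ∀ (h η : ℝ) (x : EuclideanSpace ℝ (Fin n)),
      F h η x = f (x - (η * h) • f' x) - f x + h * η ^ 2 * ‖f' x‖ ^ 2)
    (α : ℝ) (hα0 : 0 < α) (hα1 : α < 1)
    (h : ℝ) (hh : 0 < h)
    (x : ℕ → EuclideanSpace ℝ (Fin n)) (η : ℕ → ℝ) (m : ℕ → ℕ)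
    (hη : ∀ k : ℕ, η k = α ^ m k)
    (hm : ∀ k : ℕ, F h (α ^ m k) (x k) ≤ 0)
    (hleast : ∀ k : ℕ, ∀ j : ℕ, j < m k → 0 < F h (α ^ j) (x k))
    (hupd : ∀ k : ℕ, x (k + 1) = x k - (h * η k) • f' (x k))
    (μ : ℝ) :
    (∀ k : ℕ, ∃ i ≤ k, ‖f' (x i)‖ ≤
        ((L * h + 2) / (2 * α)) * Real.sqrt ((f (x 0) - f xstar) / ((k + 1) * h))) ∧
    (ConvexOn ℝ Set.univ f →
      ∃ C : ℝ, 0 < C ∧ ∀ k : ℕ, 1 ≤ k → f (x k) - f xstar ≤ C / k) ∧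
    (0 < μ → (∀ y, μ * (f y - f xstar) ≤ (1/2) * ‖f' y‖ ^ 2) →
      ∀ k : ℕ, f (x k) - f xstar ≤
        Real.exp (-(8 * α ^ 2 * μ * k * h) / (L * h + 2) ^ 2) * (f (x 0) - f xstar)) := by
  have hLh : 0 < L * h := mul_pos hL hh
  obtain ⟨c, hc⟩ : ∃ c, c = 2 * α / (L * h + 2) := ⟨_, rfl⟩
  have hc0 : 0 < c := by rw [hc]; positivity
  have hcη : ∀ k, c ≤ η k := by
    intro k
    rw [hη, hc, div_le_iff₀ (by positivity)]
    rcases Nat.eq_zero_or_pos (m k) with h0 | h0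
    · rw [h0, pow_zero]; nlinarith
    · obtain ⟨j, hj⟩ : ∃ j, m k = j + 1 := ⟨m k - 1, by omega⟩
      have h1 := hleast k j (by omega)
      have hp : 0 < α ^ j := by positivity
      have h2 := descent f f' hf L hLip (x k) (α ^ j * h) (by positivity)
      rw [hF] at h1
      rw [hj, pow_succ]
      have h3 : 0 < (h * α ^ j * ‖f' (x k)‖ ^ 2) * (α ^ j * (L * h + 2) - 2) := by nlinarith
      have h4 : 0 < α ^ j * (L * h + 2) - 2 := pos_of_mul_pos_right h3 (by positivity)
      nlinarith
  have hdec : ∀ k, f (x (k + 1)) + h * η k ^ 2 * ‖f' (x k)‖ ^ 2 ≤ f (x k) := by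
    intro k
    have h1 := hm k
    rw [hF, ← hη, mul_comm (η k) h, ← hupd] at h1
    linarith
  have hdec' : ∀ k, f (x (k + 1)) + h * c ^ 2 * ‖f' (x k)‖ ^ 2 ≤ f (x k) := by
    intro k
    have h1 : h * c ^ 2 * ‖f' (x k)‖ ^ 2 ≤ h * η k ^ 2 * ‖f' (x k)‖ ^ 2 := by
      have := hcη k
      gcongr
    linarith [hdec k]
  refine ⟨?_, ?_, ?_⟩
  · intro k
    by_contra! hcon
    set S := (f (x 0) - f xstar) / ((k + 1) * h) with hS
    have hD : 0 ≤ f (x 0) - f xstar := by linarith [hstar (x 0)]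
    have hS0 : 0 ≤ S := by positivity
    have hc1 : (L * h + 2) / (2 * α) = c⁻¹ := by rw [hc, inv_div]
    rw [hc1] at hcon
    have h1 : ∀ i ≤ k, h * S < h * c ^ 2 * ‖f' (x i)‖ ^ 2 := by
      intro i hi
      have h2 := hcon i hi
      have h3 : Real.sqrt S < c * ‖f' (x i)‖ := by
        rwa [inv_mul_lt_iff₀ hc0] at h2
      have h4 := pow_lt_pow_left₀ h3 (Real.sqrt_nonneg S) two_ne_zero
      rw [Real.sq_sqrt hS0, mul_pow] at h4
      nlinarith
    have h2 : ∀ j ≤ k + 1, f (x j) + j * (h * S) ≤ f (x 0) := by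
      intro j
      induction j with
      | zero => simp
      | succ j ih =>
        intro hj
        have := ih (by omega)
        have := h1 j (by omega)
        have := hdec' j
        push_cast
        linarith
    have h3 := h2 k (by omega)
    have h4 := h1 k le_rfl
    have h5 := hdec' k
    have h6 : (k + 1) * (h * S) = f (x 0) - f xstar := by
      rw [hS]; field_simp
    have h7 := hstar (x (k + 1))
    linarith
  · intro hconv
    have key : ∀ k : ℕ, 2 * h * c * k * (f (x k) - f xstar) + ‖x k - xstar‖ ^ 2
        + h * (f (x k) - f xstar) ≤ ‖x 0 - xstar‖ ^ 2 + h * (f (x 0) - f xstar) := by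
      intro k
      induction k with
      | zero => simp
      | succ k ih =>
        have h1 := convex_first f f' hf hconv (x k) xstar
        have h2 : ‖x (k + 1) - xstar‖ ^ 2 = ‖x k - xstar‖ ^ 2
            - 2 * (h * η k) * inner ℝ (f' (x k)) (x k - xstar)
            + (h * η k) ^ 2 * ‖f' (x k)‖ ^ 2 := by
          rw [hupd, sub_right_comm, norm_sub_sq_real, inner_smul_right, norm_smul, mul_pow,
            Real.norm_eq_abs, sq_abs, real_inner_comm]
          ring
        have hηp : 0 < η k := hc0.trans_le (hcη k)
        have hD : 0 ≤ f (x k) - f xstar := by linarith [hstar (x k)]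
        have h3 : 2 * (h * c) * (f (x k) - f xstar)
            ≤ 2 * (h * η k) * inner ℝ (f' (x k)) (x k - xstar) := by
          have := hcη k
          gcongr
        have h4 : f (x (k + 1)) ≤ f (x k) := by
          have : 0 ≤ h * η k ^ 2 * ‖f' (x k)‖ ^ 2 := by positivity
          linarith [hdec k]
        have h5 := mul_le_mul_of_nonneg_left (hdec k) hh.le
        have h6 : 2 * h * c * (k + 1) * (f (x (k + 1)) - f xstar)
            ≤ 2 * h * c * (k + 1) * (f (x k) - f xstar) := by
          gcongr
        push_cast
        nlinarith
    have hD0 : 0 ≤ f (x 0) - f xstar := by linarith [hstar (x 0)]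
    refine ⟨(‖x 0 - xstar‖ ^ 2 + h * (f (x 0) - f xstar) + 1) / (2 * h * c), by positivity, ?_⟩
    intro k hk
    have hk' : (0 : ℝ) < k := by exact_mod_cast hk
    rw [le_div_iff₀ hk', le_div_iff₀ (by positivity)]
    have h1 := key k
    have h2 : 0 ≤ h * (f (x k) - f xstar) := mul_nonneg hh.le (by linarith [hstar (x k)])
    have h3 := sq_nonneg ‖x k - xstar‖
    linarith
  · intro hμ hPL k
    have ht : ∀ k : ℕ, -(8 * α ^ 2 * μ * k * h) / (L * h + 2) ^ 2 = k * (-(2 * μ * h * c ^ 2)) := by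
      intro k
      rw [hc]; field_simp; ring
    rw [ht]
    induction k with
    | zero => simp
    | succ k ih =>
      have h1 := Real.add_one_le_exp (-(2 * μ * h * c ^ 2))
      have h2 := mul_le_mul_of_nonneg_left (hPL (x k)) (show 0 ≤ 2 * h * c ^ 2 by positivity)
      have hD : 0 ≤ f (x k) - f xstar := by linarith [hstar (x k)]
      have h3 := mul_le_mul_of_nonneg_right h1 hD
      have h4 := mul_le_mul_of_nonneg_left ih (Real.exp_pos (-(2 * μ * h * c ^ 2))).le
      have h5 := hdec' k
      rw [Nat.cast_succ, add_one_mul, Real.exp_add]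
      linarith
end
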